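/- There exists a constant C > 0 such that for all b, b' ∈ (0,1), sup_{n ≥ 0} |c_n(b,1) − c_n(b',1)| / (1+n) ≤ C |b − b'|. Consequently, for any fixed b_0 ∈ (0,1) and the sequence b_k = b_0 + 1/(k_0+k) < 1 (k ≥ 1, k_0 a fixed integer with b_0 + 1/k_0 < 1), the one-step potentials q_k = χ_{(0,b_k)}(|x|) satisfy ‖q_0 − q_k‖_{L^∞} = 1 for all k while sup_{n ≥ 0} |c_n(b_k,1) − c_n(b_0,1)| / (1+n) → 0 as k → ∞; thus no stability estimate ‖q_1−q_2‖_{L^∞} ≤ V(‖Λ_{q_1}−Λ_{q_2}‖) with V continuous and V(0)=0 can hold on the class of one-step radial potentials. -/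

import Mathlib

open Real Set MeasureTheory Filter

/-- Bessel function of the first kind of integer order, via the Poisson integral
representation. -/
noncomputable def besselJ (n : ℕ) (r : ℝ) : ℝ :=
  r ^ n / (2 ^ n * Real.Gamma ((n : ℝ) + 1 / 2) * Real.sqrt Real.pi) *
    ∫ t in (-1 : ℝ)..1, Real.cos (r * t) * (1 - t ^ 2) ^ ((n : ℝ) - 1 / 2)

/-- The eigenvalues `c_n(b,1)` of the Dirichlet-to-Neumann map for the one-step radial
potential `q = χ_{(0,b)}(|x|)` on the unit disk. -/
noncomputable def cEig (n : ℕ) (b : ℝ) : ℝ :=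
  if n = 0 then -(b * besselJ 1 b) / (b * Real.log b * besselJ 1 b + besselJ 0 b)
  else n * (besselJ (n - 1) b - b ^ (2 * n) * besselJ (n + 1) b) /
    (besselJ (n - 1) b + b ^ (2 * n) * besselJ (n + 1) b)

/-- The one-step radial potential `q(x) = χ_{(0,b)}(|x|)` on the plane. -/
noncomputable def stepPot (b : ℝ) : EuclideanSpace ℝ (Fin 2) → ℝ :=
  Set.indicator (Metric.ball 0 b) fun _ => 1

/-- The weighted cosine integral. -/
noncomputable def Wint (p b : ℝ) : ℝ := ∫ t in (-1 : ℝ)..1, Real.cos (b * t) * (1 - t ^ 2) ^ p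

lemma wt_half_int : IntervalIntegrable (fun t : ℝ => (1 - t ^ 2) ^ (-(1/2) : ℝ)) volume (-1) 1 := by
  rw [intervalIntegrable_iff_integrableOn_Ioc_of_le (by norm_num)]
  refine intervalIntegral.integrableOn_deriv_of_nonneg (g := Real.arcsin)
    Real.continuous_arcsin.continuousOn ?_ ?_
  · intro x hx
    have h := Real.hasDerivAt_arcsin (x := x) (by linarith [hx.1]) (by linarith [hx.2])
    have h0 : 0 ≤ 1 - x ^ 2 := by nlinarith [hx.1, hx.2]
    rw [Real.rpow_neg h0, ← Real.sqrt_eq_rpow, ← one_div]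
    exact h
  · intro x hx
    have h0 : 0 ≤ 1 - x ^ 2 := by nlinarith [hx.1, hx.2]
    positivity

lemma wt_meas (p b : ℝ) : Measurable (fun t : ℝ => Real.cos (b * t) * (1 - t ^ 2) ^ p) := by
  fun_prop

lemma wt_int (p : ℝ) (hp : -(1/2) ≤ p) (b : ℝ) :
    IntervalIntegrable (fun t : ℝ => Real.cos (b * t) * (1 - t ^ 2) ^ p) volume (-1) 1 := by
  have h := wt_half_int
  rw [intervalIntegrable_iff_integrableOn_Ioo_of_le (by norm_num)] at h ⊢
  refine Integrable.mono' h (wt_meas p b).aestronglyMeasurable ?_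
  refine (ae_restrict_iff' measurableSet_Ioo).2 (Eventually.of_forall ?_)
  intro t ht
  have h0 : 0 < 1 - t ^ 2 := by nlinarith [ht.1, ht.2]
  have h1 : (1 - t ^ 2) ^ p ≤ (1 - t ^ 2) ^ (-(1/2) : ℝ) :=
    Real.rpow_le_rpow_of_exponent_ge h0 (by nlinarith [sq_nonneg t]) hp
  have h2 : 0 < (1 - t ^ 2) ^ p := Real.rpow_pos_of_pos h0 p
  rw [norm_mul, Real.norm_eq_abs, Real.norm_eq_abs, abs_of_pos h2]
  nlinarith [Real.abs_cos_le_one (b * t)]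

lemma half_le_cos {b t : ℝ} (hb : b ∈ Ioo (0:ℝ) 1) (ht : t ∈ Ioo (-1:ℝ) 1) :
    1 / 2 ≤ Real.cos (b * t) := by
  have h := Real.one_sub_sq_div_two_le_cos (x := b * t)
  have h1 : t ^ 2 ≤ 1 := by nlinarith [ht.1, ht.2]
  have h2 : b ^ 2 ≤ 1 := by nlinarith [hb.1, hb.2]
  have h3 : (b * t) ^ 2 ≤ 1 := by rw [mul_pow]; nlinarith [sq_nonneg t]
  linarith

lemma W_zero_pos (p : ℝ) (hp : -(1/2) ≤ p) : 0 < Wint p 0 := by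
  refine intervalIntegral.intervalIntegral_pos_of_pos_on (wt_int p hp 0) ?_ (by norm_num)
  intro t ht
  have h0 : 0 < 1 - t ^ 2 := by nlinarith [ht.1, ht.2]
  have h2 : 0 < (1 - t ^ 2) ^ p := Real.rpow_pos_of_pos h0 p
  simpa using h2

lemma W_lower (p : ℝ) (hp : -(1/2) ≤ p) {b : ℝ} (hb : b ∈ Ioo (0:ℝ) 1) :
    Wint p 0 ≤ 2 * Wint p b := by
  unfold Wint
  rw [← intervalIntegral.integral_const_mul]
  refine intervalIntegral.integral_mono_on_of_le_Ioo (by norm_num) (wt_int p hp 0)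
    ((wt_int p hp b).const_mul 2) ?_
  intro t ht
  have h0 : 0 < 1 - t ^ 2 := by nlinarith [ht.1, ht.2]
  have h2 : 0 < (1 - t ^ 2) ^ p := Real.rpow_pos_of_pos h0 p
  have := half_le_cos hb ht
  simp only [zero_mul, Real.cos_zero]
  nlinarith

lemma W_mono {p q : ℝ} (hq : -(1/2) ≤ q) (hpq : q ≤ p) {b : ℝ} (hb : b ∈ Ioo (0:ℝ) 1) :
    Wint p b ≤ Wint q b := by
  refine intervalIntegral.integral_mono_on_of_le_Ioo (by norm_num) (wt_int p (hq.trans hpq) b)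
    (wt_int q hq b) ?_
  intro t ht
  have h0 : 0 < 1 - t ^ 2 := by nlinarith [ht.1, ht.2]
  have := half_le_cos hb ht
  have h1 : (1 - t ^ 2) ^ p ≤ (1 - t ^ 2) ^ q :=
    Real.rpow_le_rpow_of_exponent_ge h0 (by nlinarith [sq_nonneg t]) hpq
  exact mul_le_mul_of_nonneg_left h1 (by linarith)

lemma W_mono_zero {p q : ℝ} (hq : -(1/2) ≤ q) (hpq : q ≤ p) :
    Wint p 0 ≤ Wint q 0 := by
  refine intervalIntegral.integral_mono_on_of_le_Ioo (by norm_num) (wt_int p (hq.trans hpq) 0)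
    (wt_int q hq 0) ?_
  intro t ht
  have h0 : 0 < 1 - t ^ 2 := by nlinarith [ht.1, ht.2]
  have h1 : (1 - t ^ 2) ^ p ≤ (1 - t ^ 2) ^ q :=
    Real.rpow_le_rpow_of_exponent_ge h0 (by nlinarith [sq_nonneg t]) hpq
  simpa using h1

lemma cos_lip (x y : ℝ) : |Real.cos x - Real.cos y| ≤ |x - y| := by
  rw [Real.cos_sub_cos, abs_mul, abs_mul]
  have h1 := Real.abs_sin_le_one ((x + y) / 2)
  have h2 : |Real.sin ((x - y) / 2)| ≤ |(x - y) / 2| := Real.abs_sin_le_abs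
  rw [abs_div, abs_two] at h2
  have h3 : |(-2 : ℝ)| = 2 := by norm_num
  rw [h3]
  nlinarith [abs_nonneg (Real.sin ((x - y) / 2)), abs_nonneg (Real.sin ((x + y) / 2))]

lemma W_lip (p : ℝ) (hp : -(1/2) ≤ p) (b b' : ℝ) :
    |Wint p b - Wint p b'| ≤ |b - b'| * Wint p 0 := by
  unfold Wint
  rw [← intervalIntegral.integral_sub (wt_int p hp b) (wt_int p hp b'),
    ← intervalIntegral.integral_const_mul]
  refine (intervalIntegral.abs_integral_le_integral_abs (by norm_num)).trans ?_
  refine intervalIntegral.integral_mono_on_of_le_Ioo (by norm_num)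
    ((wt_int p hp b).sub (wt_int p hp b')).abs ((wt_int p hp 0).const_mul _) ?_
  intro t ht
  have h0 : 0 < 1 - t ^ 2 := by nlinarith [ht.1, ht.2]
  have h2 : 0 < (1 - t ^ 2) ^ p := Real.rpow_pos_of_pos h0 p
  have h3 := cos_lip (b * t) (b' * t)
  rw [← sub_mul, abs_mul] at h3
  have h4 : |t| ≤ 1 := abs_le.2 ⟨ht.1.le, ht.2.le⟩
  simp only [zero_mul, Real.cos_zero, one_mul]
  rw [← sub_mul, abs_mul, abs_of_pos h2]
  refine mul_le_mul_of_nonneg_right ?_ h2.le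
  nlinarith [abs_nonneg (b - b')]

lemma W_pos (p : ℝ) (hp : -(1/2) ≤ p) {b : ℝ} (hb : b ∈ Ioo (0:ℝ) 1) : 0 < Wint p b := by
  linarith [W_lower p hp hb, W_zero_pos p hp]

lemma R_mem {p q : ℝ} (hq : -(1/2) ≤ q) (hpq : q ≤ p) {b : ℝ} (hb : b ∈ Ioo (0:ℝ) 1) :
    0 ≤ Wint p b / Wint q b ∧ Wint p b / Wint q b ≤ 1 :=
  ⟨div_nonneg (W_pos p (hq.trans hpq) hb).le (W_pos q hq hb).le,
    (div_le_one (W_pos q hq hb)).2 (W_mono hq hpq hb)⟩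

lemma R_lip {p q : ℝ} (hq : -(1/2) ≤ q) (hpq : q ≤ p) {b b' : ℝ} (hb : b ∈ Ioo (0:ℝ) 1)
    (hb' : b' ∈ Ioo (0:ℝ) 1) :
    |Wint p b / Wint q b - Wint p b' / Wint q b'| ≤ 4 * |b - b'| := by
  have hp := hq.trans hpq
  have hB := W_pos q hq hb
  have hB' := W_pos q hq hb'
  obtain ⟨r0, r1⟩ := R_mem hq hpq hb'
  have e : Wint p b / Wint q b - Wint p b' / Wint q b' =
      ((Wint p b - Wint p b') - Wint p b' / Wint q b' * (Wint q b - Wint q b')) / Wint q b := by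
    field_simp
    ring
  rw [e, abs_div, abs_of_pos hB, div_le_iff₀ hB]
  have h1 := W_lip p hp b b'
  have h2 := W_lip q hq b b'
  have h3 := W_mono_zero hq hpq
  have h4 := W_lower q hq hb
  refine (abs_sub _ _).trans ?_
  rw [abs_mul, abs_of_nonneg r0]
  have h5 : Wint p b' / Wint q b' * |Wint q b - Wint q b'| ≤ |Wint q b - Wint q b'| :=
    mul_le_of_le_one_left (abs_nonneg _) r1
  have h6 : |b - b'| * Wint p 0 ≤ |b - b'| * Wint q 0 :=
    mul_le_mul_of_nonneg_left h3 (abs_nonneg _)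
  have h7 : |b - b'| * Wint q 0 ≤ |b - b'| * (2 * Wint q b) :=
    mul_le_mul_of_nonneg_left h4 (abs_nonneg _)
  linarith

lemma besselJ_eq (n : ℕ) (r : ℝ) : besselJ n r =
    r ^ n / (2 ^ n * Real.Gamma ((n : ℝ) + 1 / 2) * Real.sqrt Real.pi) * Wint ((n:ℝ) - 1/2) r := rfl

/-- The relative size of the second Bessel term. -/
noncomputable def xrat (m : ℕ) (b : ℝ) : ℝ :=
  b ^ (2 * m + 4) / ((2 * m + 1) * (2 * m + 3)) * (Wint ((m:ℝ) + 3/2) b / Wint ((m:ℝ) - 1/2) b)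

lemma cEig_succ (m : ℕ) {b : ℝ} (hb : b ∈ Ioo (0:ℝ) 1) :
    cEig (m + 1) b = (m + 1) * ((1 - xrat m b) / (1 + xrat m b)) := by
  have hq : -(1/2) ≤ (m:ℝ) - 1/2 := by linarith [(Nat.cast_nonneg m : (0:ℝ) ≤ m)]
  have hm : (0:ℝ) ≤ m := Nat.cast_nonneg m
  have hW := W_pos _ hq hb
  have hG : 0 < Real.Gamma ((m:ℝ) + 1/2) := Real.Gamma_pos_of_pos (by positivity)
  have hs : 0 < Real.sqrt Real.pi := Real.sqrt_pos.2 Real.pi_pos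
  have hJ : 0 < besselJ m b := by
    rw [besselJ_eq]
    have := hb.1
    positivity
  have hJ2 : b ^ (2 * (m + 1)) * besselJ (m + 2) b = besselJ m b * xrat m b := by
    rw [besselJ_eq, besselJ_eq, xrat]
    have g1 : Real.Gamma (((m + 2 : ℕ):ℝ) + 1/2) =
        ((m:ℝ) + 3/2) * (((m:ℝ) + 1/2) * Real.Gamma ((m:ℝ) + 1/2)) := by
      rw [← Real.Gamma_add_one (by positivity), show (m:ℝ) + 1/2 + 1 = m + 3/2 by ring,
        ← Real.Gamma_add_one (by positivity)]
      congr 1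
      push_cast
      ring
    have g2 : ((m + 2 : ℕ):ℝ) - 1/2 = (m:ℝ) + 3/2 := by push_cast; ring
    rw [g1, g2]
    have : (m:ℝ) + 3/2 ≠ 0 := by positivity
    have : (m:ℝ) + 1/2 ≠ 0 := by positivity
    generalize Real.Gamma ((m:ℝ) + 1/2) = G at *
    generalize Wint ((m:ℝ) - 1/2) b = A at *
    generalize Wint ((m:ℝ) + 3/2) b = B at *
    field_simp
    ring
  unfold cEig
  rw [if_neg (Nat.succ_ne_zero m)]
  simp only [Nat.add_sub_cancel, show m + 1 + 1 = m + 2 from rfl]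
  rw [hJ2, show besselJ m b - besselJ m b * xrat m b = besselJ m b * (1 - xrat m b) by ring,
    show besselJ m b + besselJ m b * xrat m b = besselJ m b * (1 + xrat m b) by ring,
    mul_left_comm, mul_div_mul_left _ _ hJ.ne']
  push_cast
  ring

lemma pow_lip (N : ℕ) {b b' : ℝ} (hb : b ∈ Ioo (0:ℝ) 1) (hb' : b' ∈ Ioo (0:ℝ) 1) :
    |b ^ N - b' ^ N| ≤ N * |b - b'| := by
  induction N with
  | zero => simp
  | succ k ih =>
    have e : b ^ (k+1) - b' ^ (k+1) = b * (b ^ k - b' ^ k) + b' ^ k * (b - b') := by ring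
    rw [e]
    refine (abs_add_le _ _).trans ?_
    rw [abs_mul, abs_mul, abs_of_pos hb.1, abs_of_pos (pow_pos hb'.1 k)]
    have h1 : b' ^ k ≤ 1 := pow_le_one₀ hb'.1.le hb'.2.le
    have h2 := mul_le_of_le_one_left (abs_nonneg (b ^ k - b' ^ k)) hb.2.le
    have h3 := mul_le_of_le_one_left (abs_nonneg (b - b')) h1
    push_cast
    linarith

lemma prod_lip (N : ℕ) {p q : ℝ} (hq : -(1/2) ≤ q) (hpq : q ≤ p) {b b' : ℝ}
    (hb : b ∈ Ioo (0:ℝ) 1) (hb' : b' ∈ Ioo (0:ℝ) 1) :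
    |b ^ N * (Wint p b / Wint q b) - b' ^ N * (Wint p b' / Wint q b')| ≤ (N + 4) * |b - b'| := by
  obtain ⟨r0, r1⟩ := R_mem hq hpq hb
  have h1 := R_lip hq hpq hb hb'
  have h2 := pow_lip N hb hb'
  generalize Wint p b / Wint q b = R at *
  generalize Wint p b' / Wint q b' = R' at *
  have e : b ^ N * R - b' ^ N * R' = R * (b ^ N - b' ^ N) + b' ^ N * (R - R') := by ring
  rw [e]
  refine (abs_add_le _ _).trans ?_
  rw [abs_mul, abs_mul, abs_of_nonneg r0, abs_of_pos (pow_pos hb'.1 N)]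
  have h3 := mul_le_of_le_one_left (abs_nonneg (b ^ N - b' ^ N)) r1
  have h4 := mul_le_of_le_one_left (abs_nonneg (R - R')) (pow_le_one₀ hb'.1.le hb'.2.le : b' ^ N ≤ 1)
  linarith

lemma xrat_nonneg (m : ℕ) {b : ℝ} (hb : b ∈ Ioo (0:ℝ) 1) : 0 ≤ xrat m b := by
  have hm : (0:ℝ) ≤ m := Nat.cast_nonneg m
  have := (R_mem (p := (m:ℝ) + 3/2) (q := (m:ℝ) - 1/2) (by linarith) (by linarith) hb).1
  have := hb.1
  unfold xrat
  positivity

lemma xrat_lip (m : ℕ) {b b' : ℝ} (hb : b ∈ Ioo (0:ℝ) 1) (hb' : b' ∈ Ioo (0:ℝ) 1) :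
    |xrat m b - xrat m b'| ≤ 3 * |b - b'| := by
  have hm : (0:ℝ) ≤ m := Nat.cast_nonneg m
  have h := prod_lip (2 * m + 4) (p := (m:ℝ) + 3/2) (q := (m:ℝ) - 1/2) (by linarith) (by linarith)
    hb hb'
  have hD : (0:ℝ) < (2 * m + 1) * (2 * m + 3) := by positivity
  unfold xrat
  rw [div_mul_eq_mul_div, div_mul_eq_mul_div, ← sub_div, abs_div, abs_of_pos hD, div_le_iff₀ hD]
  refine h.trans ?_
  push_cast
  nlinarith [abs_nonneg (b - b'), mul_nonneg hm (abs_nonneg (b - b')),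
    mul_nonneg (mul_nonneg hm hm) (abs_nonneg (b - b'))]

lemma cEig_succ_lip (m : ℕ) {b b' : ℝ} (hb : b ∈ Ioo (0:ℝ) 1) (hb' : b' ∈ Ioo (0:ℝ) 1) :
    |cEig (m + 1) b - cEig (m + 1) b'| ≤ (m + 1) * (6 * |b - b'|) := by
  have hm : (0:ℝ) < (m:ℝ) + 1 := by positivity
  rw [cEig_succ m hb, cEig_succ m hb', ← mul_sub, abs_mul, abs_of_pos hm]
  refine mul_le_mul_of_nonneg_left ?_ hm.le
  have h := xrat_lip m hb hb'
  have h0 := xrat_nonneg m hb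
  have h0' := xrat_nonneg m hb'
  generalize xrat m b = x at *
  generalize xrat m b' = y at *
  have e : (1 - x) / (1 + x) - (1 - y) / (1 + y) = -2 * (x - y) / ((1 + x) * (1 + y)) := by
    field_simp
    ring
  have hD : 1 ≤ (1 + x) * (1 + y) := by nlinarith
  rw [e, abs_div, abs_of_pos (by linarith : 0 < (1 + x) * (1 + y)), div_le_iff₀ (by linarith),
    abs_mul]
  have h3 : |(-2 : ℝ)| = 2 := by norm_num
  rw [h3]
  nlinarith [abs_nonneg (b - b')]

lemma cEig_zero_eq {b : ℝ} (hb : b ∈ Ioo (0:ℝ) 1) :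
    cEig 0 b = -(b ^ 2 * (Wint (1/2) b / Wint (-(1/2)) b)) /
      (1 + (b ^ 2 * (Wint (1/2) b / Wint (-(1/2)) b)) * Real.log b) := by
  have hW := W_pos (-(1/2)) le_rfl hb
  have hpi := Real.pi_pos
  have hs : Real.sqrt Real.pi * Real.sqrt Real.pi = Real.pi := Real.mul_self_sqrt hpi.le
  have g0 : besselJ 0 b = Wint (-(1/2)) b / Real.pi := by
    rw [besselJ_eq]
    simp only [Nat.cast_zero, zero_add, zero_sub, pow_zero, one_mul]
    rw [Real.Gamma_one_half_eq, hs]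
    ring
  have g1 : besselJ 1 b = b * Wint (1/2) b / Real.pi := by
    rw [besselJ_eq]
    have : Real.Gamma (1 / 2 + 1) = 1/2 * √π := by
      rw [Real.Gamma_add_one (by norm_num), Real.Gamma_one_half_eq]
    simp only [Nat.cast_one, pow_one]
    rw [add_comm, this, show (2 * (1 / 2 * √π) * √π) = π by linear_combination hs,
      show (1:ℝ) - 1/2 = 1/2 by norm_num]
    ring
  unfold cEig
  rw [if_pos rfl, g0, g1]
  generalize Wint (-(1/2)) b = A at *
  generalize Wint (1/2) b = B at *
  have e1 : -(b * (b * B / π)) = (A / π) * (-(b ^ 2 * (B / A))) := by field_simp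
  have e2 : b * Real.log b * (b * B / π) + A / π = (A / π) * (1 + b ^ 2 * (B / A) * Real.log b) := by
    field_simp
    ring
  rw [e1, e2, mul_div_mul_left _ _ (div_pos hW hpi).ne']

lemma log_bd {b y : ℝ} (hb : b ∈ Ioo (0:ℝ) 1) (h0 : 0 ≤ y) (h1 : y ≤ b ^ 2) :
    3/4 ≤ 1 + y * Real.log b := by
  have hb0 := hb.1
  have h := Real.one_sub_inv_le_log_of_pos hb.1
  have h2 : Real.log b ≤ 0 := Real.log_nonpos hb.1.le hb.2.le
  have h3 : b ^ 2 * Real.log b ≤ y * Real.log b := mul_le_mul_of_nonpos_right h1 h2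
  have h4 : b ^ 2 * (1 - b⁻¹) ≤ b ^ 2 * Real.log b := mul_le_mul_of_nonneg_left h (sq_nonneg b)
  have h5 : b ^ 2 * (1 - b⁻¹) = b ^ 2 - b := by field_simp
  nlinarith [sq_nonneg (b - 1/2)]

lemma log_lip {b b' y y' : ℝ} (hb : b ∈ Ioo (0:ℝ) 1) (hb' : b' ∈ Ioo (0:ℝ) 1)
    (h0 : 0 ≤ y) (h1 : y ≤ b ^ 2) (h0' : 0 ≤ y') (h1' : y' ≤ b' ^ 2) (hle : b ≤ b') :
    y * y' * |Real.log b' - Real.log b| ≤ |b - b'| := by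
  have hb0 := hb.1
  have hl : Real.log b ≤ Real.log b' := Real.log_le_log hb.1 hle
  rw [abs_of_nonneg (by linarith), abs_sub_comm, abs_of_nonneg (by linarith),
    ← Real.log_div hb'.1.ne' hb.1.ne']
  have h := Real.log_le_sub_one_of_pos (div_pos hb'.1 hb.1)
  have e : b * (b' / b - 1) = b' - b := by field_simp
  have hn : 0 ≤ Real.log (b' / b) := Real.log_nonneg ((one_le_div hb0).2 hle)
  have hy : y ≤ b := by nlinarith [hb.2]
  have hy' : y' ≤ 1 := by nlinarith [hb'.2, hb'.1]
  have hyy : y * y' ≤ b := by nlinarith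
  calc y * y' * Real.log (b' / b) ≤ b * Real.log (b' / b) := mul_le_mul_of_nonneg_right hyy hn
    _ ≤ b * (b' / b - 1) := mul_le_mul_of_nonneg_left h hb0.le
    _ = b' - b := e

lemma cEig_zero_lip {b b' : ℝ} (hb : b ∈ Ioo (0:ℝ) 1) (hb' : b' ∈ Ioo (0:ℝ) 1) :
    |cEig 0 b - cEig 0 b'| ≤ 13 * |b - b'| := by
  rw [cEig_zero_eq hb, cEig_zero_eq hb']
  have h := prod_lip 2 (p := 1/2) (q := -(1/2)) (by linarith) (by linarith) hb hb'
  obtain ⟨r0, r1⟩ := R_mem (p := 1/2) (q := -(1/2)) (by linarith) (by linarith) hb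
  obtain ⟨r0', r1'⟩ := R_mem (p := 1/2) (q := -(1/2)) (by linarith) (by linarith) hb'
  have y0 := mul_nonneg (sq_nonneg b) r0
  have y0' := mul_nonneg (sq_nonneg b') r0'
  have y1 := mul_le_of_le_one_right (sq_nonneg b) r1
  have y1' := mul_le_of_le_one_right (sq_nonneg b') r1'
  generalize b ^ 2 * (Wint (1/2) b / Wint (-(1/2)) b) = y at *
  generalize b' ^ 2 * (Wint (1/2) b' / Wint (-(1/2)) b') = y' at *
  have d := log_bd hb y0 y1
  have d' := log_bd hb' y0' y1'
  have hl : y * y' * |Real.log b' - Real.log b| ≤ |b - b'| := by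
    rcases le_total b b' with hle | hle
    · exact log_lip hb hb' y0 y1 y0' y1' hle
    · rw [mul_comm y, abs_sub_comm, abs_sub_comm b]
      exact log_lip hb' hb y0' y1' y0 y1 hle
  have hp : 0 < 1 + y * Real.log b := by linarith
  have hp' : 0 < 1 + y' * Real.log b' := by linarith
  have e : -y / (1 + y * Real.log b) - -y' / (1 + y' * Real.log b') =
      (-(y - y') - y * y' * (Real.log b' - Real.log b)) /
        ((1 + y * Real.log b) * (1 + y' * Real.log b')) := by
    rw [div_sub_div _ _ hp.ne' hp'.ne']
    congr 1
    ring
  have hD : 9/16 ≤ (1 + y * Real.log b) * (1 + y' * Real.log b') := by nlinarith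
  rw [e, abs_div, abs_of_pos (mul_pos hp hp'), div_le_iff₀ (mul_pos hp hp')]
  refine (abs_sub _ _).trans ?_
  rw [abs_neg, abs_mul, abs_of_nonneg (mul_nonneg y0 y0')]
  push_cast at h
  nlinarith [abs_nonneg (b - b')]

lemma main_lip {b b' : ℝ} (hb : b ∈ Ioo (0:ℝ) 1) (hb' : b' ∈ Ioo (0:ℝ) 1) (n : ℕ) :
    |cEig n b - cEig n b'| / (1 + n) ≤ 13 * |b - b'| := by
  rw [div_le_iff₀ (by positivity)]
  have h0 := abs_nonneg (b - b')
  cases n with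
  | zero => simpa using cEig_zero_lip hb hb'
  | succ m =>
    refine (cEig_succ_lip m hb hb').trans ?_
    have hm : (0:ℝ) ≤ m := Nat.cast_nonneg m
    push_cast
    nlinarith [mul_nonneg hm h0]

lemma step_norm {b b' : ℝ} (h0 : 0 < b) (h : b < b') :
    eLpNorm (stepPot b - stepPot b') ⊤ volume = 1 := by
  have e : stepPot b - stepPot b' =
      (Metric.ball (0 : EuclideanSpace ℝ (Fin 2)) b' \ Metric.ball 0 b).indicator
        (fun _ => (-1 : ℝ)) := by
    funext x
    simp only [stepPot, Pi.sub_apply, Set.indicator, Set.mem_diff, Metric.mem_ball, dist_zero_right]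
    by_cases h1 : ‖x‖ < b
    · have h2 : ‖x‖ < b' := h1.trans h
      simp [h1, h2]
    · by_cases h2 : ‖x‖ < b' <;> simp [h1, h2]
  have hpos : volume (Metric.ball (0 : EuclideanSpace ℝ (Fin 2)) b' \ Metric.ball 0 b) ≠ 0 := by
    have ho : IsOpen (Metric.ball (0 : EuclideanSpace ℝ (Fin 2)) b' \ Metric.closedBall 0 b) :=
      Metric.isOpen_ball.sdiff Metric.isClosed_closedBall
    have hne : (Metric.ball (0 : EuclideanSpace ℝ (Fin 2)) b' \ Metric.closedBall 0 b).Nonempty := by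
      refine ⟨EuclideanSpace.single 0 ((b + b') / 2), ?_⟩
      have hn : ‖EuclideanSpace.single (0 : Fin 2) ((b + b') / 2)‖ = (b + b') / 2 := by
        rw [EuclideanSpace.norm_single, Real.norm_eq_abs, abs_of_pos (by linarith)]
      simp only [Set.mem_diff, Metric.mem_ball, Metric.mem_closedBall, dist_zero_right, hn]
      constructor <;> linarith
    have := ho.measure_pos volume hne
    refine (this.trans_le (measure_mono ?_)).ne'
    exact Set.diff_subset_diff_right Metric.ball_subset_closedBall
  rw [e, eLpNorm_indicator_const' (measurableSet_ball.diff measurableSet_ball) hpos (by simp)]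
  simp

lemma sup_tendsto {b₀ : ℝ} (hb : b₀ ∈ Ioo (0:ℝ) 1) {k₀ : ℕ} (hk : 1 ≤ k₀)
    (h : b₀ + 1 / (k₀ : ℝ) < 1) :
    Filter.Tendsto
          (fun k : ℕ => ⨆ n : ℕ, |cEig n (b₀ + 1 / ((k₀ : ℝ) + k)) - cEig n b₀| / (1 + n))
          Filter.atTop (nhds 0) := by
  have hk' : (0:ℝ) < k₀ := by exact_mod_cast hk
  have hmem : ∀ k : ℕ, b₀ + 1 / ((k₀ : ℝ) + k) ∈ Ioo (0:ℝ) 1 := by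
    intro k
    have h1 : 1 / ((k₀ : ℝ) + k) ≤ 1 / (k₀ : ℝ) :=
      one_div_le_one_div_of_le hk' (by linarith [(Nat.cast_nonneg k : (0:ℝ) ≤ k)])
    have h2 : 0 < 1 / ((k₀ : ℝ) + k) := by positivity
    exact ⟨by linarith [hb.1], by linarith⟩
  have hlim : Tendsto (fun k : ℕ => 13 * (1 / ((k₀ : ℝ) + k))) atTop (nhds 0) := by
    have : Tendsto (fun k : ℕ => (k₀ : ℝ) + k) atTop atTop :=
      tendsto_atTop_add_const_left _ _ tendsto_natCast_atTop_atTop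
    simpa using (this.inv_tendsto_atTop).const_mul 13
  refine squeeze_zero (fun k => Real.iSup_nonneg fun n => by positivity) (fun k => ?_) hlim
  refine Real.iSup_le (fun n => ?_) (by positivity)
  have h3 := main_lip (hmem k) hb n
  rwa [add_sub_cancel_left, abs_of_nonneg (by positivity : 0 ≤ 1 / ((k₀ : ℝ) + k))] at h3

theorem no_stability_estimate :
    (∃ C > 0, ∀ b ∈ Set.Ioo (0 : ℝ) 1, ∀ b' ∈ Set.Ioo (0 : ℝ) 1, ∀ n : ℕ,
        |cEig n b - cEig n b'| / (1 + n) ≤ C * |b - b'|) ∧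
    (∀ b₀ ∈ Set.Ioo (0 : ℝ) 1, ∀ k₀ : ℕ, 1 ≤ k₀ → b₀ + 1 / (k₀ : ℝ) < 1 →
      (∀ k : ℕ, 1 ≤ k →
          eLpNorm (stepPot b₀ - stepPot (b₀ + 1 / ((k₀ : ℝ) + k))) ⊤ volume = 1) ∧
        Filter.Tendsto
          (fun k : ℕ => ⨆ n : ℕ, |cEig n (b₀ + 1 / ((k₀ : ℝ) + k)) - cEig n b₀| / (1 + n))
          Filter.atTop (nhds 0)) ∧
    ¬ ∃ V : ℝ → ℝ, Continuous V ∧ V 0 = 0 ∧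
        ∀ b ∈ Set.Ioo (0 : ℝ) 1, ∀ b' ∈ Set.Ioo (0 : ℝ) 1, b ≠ b' →
          (1 : ℝ) ≤ V (⨆ n : ℕ, |cEig n b - cEig n b'| / (1 + n)) := by
  refine ⟨⟨13, by norm_num, fun b hb b' hb' n => main_lip hb hb' n⟩, ?_, ?_⟩
  · intro b₀ hb k₀ hk h
    refine ⟨fun k hk1 => step_norm hb.1 ?_, sup_tendsto hb hk h⟩
    have hk' : (0:ℝ) < k₀ := by exact_mod_cast hk
    have : 0 < 1 / ((k₀ : ℝ) + k) := by positivity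
    linarith
  · rintro ⟨V, hV, hV0, hall⟩
    have hb : (1/2 : ℝ) ∈ Ioo (0:ℝ) 1 := by constructor <;> norm_num
    have ht := sup_tendsto hb (k₀ := 3) (by norm_num) (by norm_num)
    have h2 := (hV.tendsto 0).comp ht
    rw [hV0] at h2
    have h3 : (1:ℝ) ≤ 0 := by
      refine ge_of_tendsto' h2 fun k => ?_
      have hk : (0:ℝ) ≤ k := Nat.cast_nonneg k
      have p1 : 0 < 1 / (((3:ℕ) : ℝ) + k) := by positivity
      have p2 : 1 / (((3:ℕ) : ℝ) + k) ≤ 1 / 3 :=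
        one_div_le_one_div_of_le (by norm_num) (by push_cast; linarith)
      exact hall _ ⟨by linarith, by linarith⟩ _ hb (by linarith)
    linarith
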